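/- arXiv:1909.09935 — 6 statements merged into one kernel-verified Lean document; each statement's English description precedes it below -/
import Mathlib

section
/- Fix α ∈ ℝ and Ω ∈ ℝ. Define the quaternion-valued function q(t) = (cos(α/2), 0, sin(α/2)·cos(Ωt), sin(α/2)·sin(Ωt)) (real part first) and the pure quaternion ω(t) = Ω·(0, −2 sin²(α/2), −sin α · sin(Ωt), sin α · cos(Ωt)). Then q is differentiable and q̇(t) = ½ q(t) ∘ ω(t) for all t ∈ ℝ. -/
/-!
Write `q = cos (α / 2) + sin (α / 2) u`, where `u` is a square root of `-1` that precesses about the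
axis `e`, i.e. `u̇ = Ω e u`, so `q̇ = Ω sin (α / 2) e u`. In these terms
`ω = Ω (sin α e u - 2 sin² (α / 2) e)`. Since `u e = -e u` and `u² = -1`, we have `u e u = e`, and
expanding `q ω` with the half-angle formula for `sin α` leaves exactly `2 Ω sin (α / 2) e u`.
-/

noncomputable section

open Real

section Algebra

variable {A : Type*} [Ring A] {e u v : A}

lemma mul_axis_mul_self (hu : u * u = -1) (hue : u * e = -(e * u)) : u * (e * u) = e := by
  rw [← mul_assoc, hue, neg_mul, mul_assoc, hu, mul_neg_one, neg_neg]

variable [Algebra ℝ A]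

/-- The vector `v` turned about the axis `e` through the angle `θ`. It is meant for anticommuting
square roots `e`, `v` of `-1`, for which `e * v` is `v` turned through a right angle. -/
def precess (e v : A) (θ : ℝ) : A :=
  cos θ • v + sin θ • (e * v)

/-- The attitude quaternion of the rotation through the angle `α` about the unit vector `u`. -/
def coningAttitude (α : ℝ) (u : A) : A :=
  algebraMap ℝ A (cos (α / 2)) + sin (α / 2) • u

/-- The angular velocity, for unit precession rate, of a coning motion with coning angle `α` whose
rotation axis `u` precesses about `e`. -/
def coningVelocity (α : ℝ) (e u : A) : A :=
  sin α • (e * u) - (2 * sin (α / 2) ^ 2) • e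

lemma precess_mul_axis (hve : v * e = -(e * v)) (θ : ℝ) :
    precess e v θ * e = -(e * precess e v θ) := by
  simp only [precess, add_mul, mul_add, smul_mul_assoc, mul_smul_comm, mul_assoc, hve, mul_neg,
    smul_neg, neg_add]

lemma axis_mul_precess (he : e * e = -1) (θ : ℝ) :
    e * precess e v θ = -sin θ • v + cos θ • (e * v) := by
  simp only [precess, mul_add, mul_smul_comm, ← mul_assoc, he, neg_one_mul, smul_neg, neg_smul]
  abel

lemma precess_mul_self (he : e * e = -1) (hv : v * v = -1) (hve : v * e = -(e * v)) (θ : ℝ) :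
    precess e v θ * precess e v θ = -1 := by
  have v_mul_ev : v * (e * v) = e := mul_axis_mul_self hv hve
  have ev_mul_v : e * v * v = -e := by rw [mul_assoc, hv, mul_neg_one]
  have ev_mul_ev : e * v * (e * v) = -1 := by rw [mul_assoc, v_mul_ev, he]
  calc precess e v θ * precess e v θ
      = -((cos θ ^ 2 + sin θ ^ 2) • (1 : A)) := by
        simp only [precess, add_mul, mul_add, smul_mul_assoc, mul_smul_comm, hv, v_mul_ev,
          ev_mul_v, ev_mul_ev]
        module
    _ = -1 := by rw [cos_sq_add_sin_sq, one_smul]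

lemma coningAttitude_mul_coningVelocity (hu : u * u = -1) (hue : u * e = -(e * u)) (α : ℝ) :
    coningAttitude α u * coningVelocity α e u = (2 * sin (α / 2)) • (e * u) := by
  have sin_half_angle : sin α = 2 * sin (α / 2) * cos (α / 2) := by
    rw [← sin_two_mul, mul_div_cancel₀ α two_ne_zero]
  calc coningAttitude α u * coningVelocity α e u
      = (2 * sin (α / 2) * (sin (α / 2) ^ 2 + cos (α / 2) ^ 2)) • (e * u) := by
        simp only [coningAttitude, coningVelocity, sin_half_angle, Algebra.algebraMap_eq_smul_one,
          add_mul, mul_sub, smul_mul_assoc, mul_smul_comm, one_mul, mul_axis_mul_self hu hue, hue]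
        module
    _ = (2 * sin (α / 2)) • (e * u) := by rw [sin_sq_add_cos_sq, mul_one]

end Algebra

section Kinematics

variable {A : Type*} [NormedRing A] [NormedAlgebra ℝ A] {e v : A} {φ : ℝ → ℝ} {φ' t : ℝ}

lemma hasDerivAt_precess (he : e * e = -1) (hφ : HasDerivAt φ φ' t) :
    HasDerivAt (fun τ ↦ precess e v (φ τ)) (φ' • (e * precess e v (φ t))) t := by
  refine ((hφ.cos.smul_const v).fun_add (hφ.sin.smul_const (e * v))).congr_deriv ?_
  rw [axis_mul_precess he]
  module

theorem coning_motion_quaternion_kinematics_general (he : e * e = -1) (hv : v * v = -1)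
    (hve : v * e = -(e * v)) (α : ℝ) (hφ : HasDerivAt φ φ' t) :
    HasDerivAt (fun τ ↦ coningAttitude α (precess e v (φ τ)))
      ((1 / 2 : ℝ) • (coningAttitude α (precess e v (φ t)) *
        φ' • coningVelocity α e (precess e v (φ t)))) t := by
  refine (((hasDerivAt_precess he hφ).fun_const_smul (sin (α / 2))).const_add
    (algebraMap ℝ A (cos (α / 2)))).congr_deriv ?_
  rw [mul_smul_comm, coningAttitude_mul_coningVelocity (precess_mul_self he hv hve _)
    (precess_mul_axis hve _)]
  module

end Kinematics

section Coordinates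

open Quaternion

/-- The imaginary unit `i`, the precession axis of the classical coning motion. -/
@[simps]
def quaternionI : ℍ[ℝ] := ⟨0, 1, 0, 0⟩

/-- The imaginary unit `j`, the rotation axis of the classical coning motion at time `0`. -/
@[simps]
def quaternionJ : ℍ[ℝ] := ⟨0, 0, 1, 0⟩

lemma quaternionI_mul_self : quaternionI * quaternionI = -1 := by
  ext <;> simp

lemma quaternionJ_mul_self : quaternionJ * quaternionJ = -1 := by
  ext <;> simp

lemma quaternionJ_mul_quaternionI : quaternionJ * quaternionI = -(quaternionI * quaternionJ) := by
  ext <;> simp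

lemma coningAttitude_precess_quaternionI_quaternionJ (α θ : ℝ) :
    coningAttitude α (precess quaternionI quaternionJ θ) =
      ⟨cos (α / 2), 0, sin (α / 2) * cos θ, sin (α / 2) * sin θ⟩ := by
  ext <;> simp [coningAttitude, precess, algebraMap_def]

lemma smul_coningVelocity_precess_quaternionI_quaternionJ (α Ω θ : ℝ) :
    Ω • coningVelocity α quaternionI (precess quaternionI quaternionJ θ) =
      ⟨0, Ω * (-2 * sin (α / 2) ^ 2), Ω * (-(sin α * sin θ)), Ω * (sin α * cos θ)⟩ := by
  ext <;> simp [coningVelocity, precess]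

end Coordinates

end

/-- The classical coning motion quaternion
`q(t) = (cos(α/2), 0, sin(α/2)cos(Ωt), sin(α/2)sin(Ωt))` satisfies the quaternion
kinematic equation `q̇ = ½ q ∘ ω` with the coning angular velocity
`ω(t) = Ω(0, −2sin²(α/2), −sin α sin(Ωt), sin α cos(Ωt))` (a pure quaternion). -/
theorem coning_motion_quaternion_kinematics
    (α Ω : ℝ) (q ω : ℝ → Quaternion ℝ)
    (hq : ∀ t : ℝ, q t =
      ⟨Real.cos (α / 2), 0, Real.sin (α / 2) * Real.cos (Ω * t),
        Real.sin (α / 2) * Real.sin (Ω * t)⟩)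
    (hω : ∀ t : ℝ, ω t =
      ⟨0, Ω * (-2 * Real.sin (α / 2) ^ 2), Ω * (-(Real.sin α * Real.sin (Ω * t))),
        Ω * (Real.sin α * Real.cos (Ω * t))⟩) :
    Differentiable ℝ q ∧ ∀ t : ℝ, deriv q t = (1 / 2 : ℝ) • (q t * ω t) := by
  have hasDerivAt_q (t : ℝ) : HasDerivAt q ((1 / 2 : ℝ) • (q t * ω t)) t := by
    have hphase : HasDerivAt (fun τ ↦ Ω * τ) Ω t := by
      simpa using (hasDerivAt_id t).const_mul Ω
    simpa only [coningAttitude_precess_quaternionI_quaternionJ,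
      smul_coningVelocity_precess_quaternionI_quaternionJ, ← hq, ← hω] using
      coning_motion_quaternion_kinematics_general quaternionI_mul_self quaternionJ_mul_self
        quaternionJ_mul_quaternionI α hphase
  exact ⟨fun t ↦ (hasDerivAt_q t).differentiableAt, fun t ↦ (hasDerivAt_q t).deriv⟩
end

section
/- Fix α ∈ ℝ with cos(α/2) ≠ 0 and Ω ∈ ℝ. Define g(t) = 2 tan(α/2)·(0, cos(Ωt), sin(Ωt)) ∈ ℝ³ and ω(t) = Ω·(−2 sin²(α/2), −sin α · sin(Ωt), sin α · cos(Ωt)) ∈ ℝ³. Then g is differentiable and ġ(t) = ω(t) + ½ g(t) × ω(t) + ¼ ⟨g(t), ω(t)⟩ g(t) for all t ∈ ℝ. -/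
open Matrix

/-!
For fixed `g` the rate map `ω ↦ ω + ½ g × ω + ¼ ⟨g, ω⟩ g` is inverted by
`v ↦ (1 + ¼ |g|²)⁻¹ (v - ½ g × v)`, because its quadratic term cancels the `g`-component of
`g × (g × v) = ⟨g, v⟩ g - |g|² v`. So it suffices to recover `ω` from `ġ`. For coning,
`g = 2 tan(α/2) r` with `r` a uniformly rotating unit vector, hence `(1 + ¼ |g|²)⁻¹ = cos²(α/2)`,
and the half-angle formulas give `ω`.
-/

/-- The right-hand side `ω + ½ g × ω + ¼ ⟨g, ω⟩ g` of the kinematic equation for the Rodrigues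
vector `g` of a body rotating with angular velocity `ω`. Vectors live in `Fin 3 → ℝ`, so the
Euclidean inner product is `⬝ᵥ`. -/
noncomputable def rodriguesRate (g ω : Fin 3 → ℝ) : Fin 3 → ℝ :=
  ω + (1 / 2 : ℝ) • (g ⨯₃ ω) + (1 / 4 : ℝ) • ((g ⬝ᵥ ω) • g)

/-- The angular velocity that makes the Rodrigues vector `g` move with velocity `v`. -/
noncomputable def rodriguesAngularVelocity (g v : Fin 3 → ℝ) : Fin 3 → ℝ :=
  (1 + (1 / 4 : ℝ) * (g ⬝ᵥ g))⁻¹ • (v - (1 / 2 : ℝ) • (g ⨯₃ v))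

theorem rodriguesRate_smul (c : ℝ) (g ω : Fin 3 → ℝ) :
    rodriguesRate g (c • ω) = c • rodriguesRate g ω := by
  simp only [rodriguesRate, map_smul, dotProduct_smul, smul_eq_mul]
  module

theorem rodriguesRate_sub_half_cross (g v : Fin 3 → ℝ) :
    rodriguesRate g (v - (1 / 2 : ℝ) • (g ⨯₃ v)) = (1 + (1 / 4 : ℝ) * (g ⬝ᵥ g)) • v := by
  have triple_product : g ⨯₃ (g ⨯₃ v) = (g ⬝ᵥ v) • g - (g ⬝ᵥ g) • v :=
    cross_cross_eq_smul_sub_smul' g g v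
  simp only [rodriguesRate, map_sub, map_smul, dotProduct_sub, dotProduct_smul, dot_self_cross,
    triple_product]
  module

theorem rodriguesRate_rodriguesAngularVelocity (g v : Fin 3 → ℝ) :
    rodriguesRate g (rodriguesAngularVelocity g v) = v := by
  have one_add_quarter_norm_sq_ne_zero : 1 + (1 / 4 : ℝ) * (g ⬝ᵥ g) ≠ 0 := by
    have : 0 ≤ g ⬝ᵥ g := Finset.sum_nonneg fun i _ => mul_self_nonneg (g i)
    positivity
  rw [rodriguesAngularVelocity, rodriguesRate_smul, rodriguesRate_sub_half_cross,
    inv_smul_smul₀ one_add_quarter_norm_sq_ne_zero]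

/-- The unit vector at angle `θ` in the plane orthogonal to the first coordinate axis, which is
the axis of the cone. -/
noncomputable def radialVector (θ : ℝ) : Fin 3 → ℝ :=
  ![0, Real.cos θ, Real.sin θ]

/-- The unit vector a quarter turn ahead of `radialVector θ` about the first coordinate axis. -/
noncomputable def tangentialVector (θ : ℝ) : Fin 3 → ℝ :=
  ![0, -Real.sin θ, Real.cos θ]

theorem radialVector_dotProduct_self (θ : ℝ) : radialVector θ ⬝ᵥ radialVector θ = 1 := by
  simp [radialVector, ← sq]

theorem radialVector_cross_tangentialVector (θ : ℝ) :
    radialVector θ ⨯₃ tangentialVector θ = ![1, 0, 0] := by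
  simp [radialVector, tangentialVector, cross_apply, ← sq]

theorem hasDerivAt_radialVector (θ : ℝ) :
    HasDerivAt radialVector (tangentialVector θ) θ := by
  rw [hasDerivAt_pi]
  intro i
  fin_cases i
  · exact hasDerivAt_const θ 0
  · exact Real.hasDerivAt_cos θ
  · exact Real.hasDerivAt_sin θ

theorem hasDerivAt_smul_radialVector_mul (c Ω t : ℝ) :
    HasDerivAt (fun t => c • radialVector (Ω * t)) (c • Ω • tangentialVector (Ω * t)) t :=
  ((hasDerivAt_radialVector (Ω * t)).scomp t (hasDerivAt_const_mul Ω)).const_smul c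

theorem rodriguesAngularVelocity_two_tan_half_smul_radialVector
    {α : ℝ} (hα : Real.cos (α / 2) ≠ 0) (Ω θ : ℝ) :
    rodriguesAngularVelocity ((2 * Real.tan (α / 2)) • radialVector θ)
        ((2 * Real.tan (α / 2)) • Ω • tangentialVector θ) =
      Ω • ![-2 * Real.sin (α / 2) ^ 2, -(Real.sin α * Real.sin θ), Real.sin α * Real.cos θ] := by
  have sin_half : Real.tan (α / 2) * Real.cos (α / 2) = Real.sin (α / 2) := Real.tan_mul_cos hα
  have sin_double : Real.sin α = 2 * Real.sin (α / 2) * Real.cos (α / 2) := by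
    rw [← Real.sin_two_mul, mul_div_cancel₀ α two_ne_zero]
  have inv_one_add_quarter_norm_sq :
      (1 + (1 / 4 : ℝ) * ((2 * Real.tan (α / 2)) * (2 * Real.tan (α / 2))))⁻¹ =
        Real.cos (α / 2) ^ 2 := by
    rw [← Real.inv_one_add_tan_sq hα]
    ring
  simp only [rodriguesAngularVelocity, smul_dotProduct, dotProduct_smul, map_smul,
    LinearMap.smul_apply, radialVector_dotProduct_self, radialVector_cross_tangentialVector,
    smul_eq_mul, mul_one, inv_one_add_quarter_norm_sq, sin_double, ← sin_half]
  ext i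
  fin_cases i <;> simp [tangentialVector] <;> ring

/-- The classical coning motion Rodrigues vector
`g(t) = 2 tan(α/2)(0, cos(Ωt), sin(Ωt))` satisfies the Rodrigues vector rate
equation `ġ = ω + ½ g × ω + ¼ ⟨g, ω⟩ g` with the coning angular velocity
`ω(t) = Ω(−2sin²(α/2), −sin α sin(Ωt), sin α cos(Ωt))`. -/
theorem coning_motion_rodrigues_kinematics
    (α Ω : ℝ) (hα : Real.cos (α / 2) ≠ 0)
    (g ω : ℝ → Fin 3 → ℝ)
    (hg : ∀ t : ℝ, g t =
      (2 * Real.tan (α / 2)) • ![0, Real.cos (Ω * t), Real.sin (Ω * t)])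
    (hω : ∀ t : ℝ, ω t =
      Ω • ![-2 * Real.sin (α / 2) ^ 2, -(Real.sin α * Real.sin (Ω * t)),
        Real.sin α * Real.cos (Ω * t)]) :
    Differentiable ℝ g ∧
      ∀ t : ℝ, deriv g t =
        ω t + (1 / 2 : ℝ) • crossProduct (g t) (ω t)
            + (1 / 4 : ℝ) • ((∑ i, g t i * ω t i) • g t) := by
  obtain rfl : g = fun t => (2 * Real.tan (α / 2)) • radialVector (Ω * t) := funext hg
  have hderiv := hasDerivAt_smul_radialVector_mul (2 * Real.tan (α / 2)) Ω
  refine ⟨fun t => (hderiv t).differentiableAt, fun t => ?_⟩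
  rw [(hderiv t).deriv, hω, ← rodriguesAngularVelocity_two_tan_half_smul_radialVector hα]
  exact (rodriguesRate_rodriguesAngularVelocity _ _).symm
end

section
/- Fix α ∈ ℝ with α ≠ 0 and cos α ≠ 1, and Ω ∈ ℝ. Define σ(t) = α·(0, cos(Ωt), sin(Ωt)) ∈ ℝ³ and ω(t) = Ω·(−2 sin²(α/2), −sin α · sin(Ωt), sin α · cos(Ωt)) ∈ ℝ³. Then σ is differentiable, |σ(t)| = |α| for all t, and σ satisfies the Bortz rotation vector rate equation σ̇(t) = ω(t) + ½ σ(t) × ω(t) + (1/α²)·(1 − α·sin α / (2(1 − cos α)))·σ(t) × (σ(t) × ω(t)) for all t ∈ ℝ. -/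
open Matrix

/-!
A rotation vector of constant angle `α` about a moving unit axis `n` has (body-frame) angular
velocity `ω = sin α • n' - (1 - cos α) • n × n'`. As `n' ⟂ n`, the vector `ω` is orthogonal to `n`,
so that `n × (n × ω) = -ω` and the triple product of the Bortz equation only rescales `ω`:
the right-hand side becomes `(1 - α² A(α)) ω + (α / 2) n × ω`, where
`1 - α² A(α) = α sin α / (2 (1 - cos α))`. Expanded in `n'` and `n × n'`, the coefficient of
`n × n'` cancels, and `sin² α = (1 - cos α) (1 + cos α)` makes that of `n'` equal to `α`. Coning is
the case of an axis rotating uniformly in a coordinate plane.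
-/

section UnitVector

variable {ι : Type*} [Fintype ι]

theorem sqrt_sum_sq_smul_of_dotProduct_self_eq_one {n : ι → ℝ} (hn : n ⬝ᵥ n = 1) (a : ℝ) :
    √(∑ i, (a • n) i ^ 2) = |a| := by
  have hsum : ∑ i, (a • n) i ^ 2 = (a • n) ⬝ᵥ (a • n) := by simp only [dotProduct, sq]
  rw [hsum, smul_dotProduct, dotProduct_smul, hn, smul_eq_mul, smul_eq_mul, mul_one,
    Real.sqrt_mul_self_eq_abs]

theorem hasDerivAt_dotProduct {𝕜 : Type*} [NontriviallyNormedField 𝕜] {f g : 𝕜 → ι → 𝕜}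
    {f' g' : ι → 𝕜} {t : 𝕜} (hf : HasDerivAt f f' t) (hg : HasDerivAt g g' t) :
    HasDerivAt (fun s ↦ f s ⬝ᵥ g s) (f' ⬝ᵥ g t + f t ⬝ᵥ g') t := by
  simp only [dotProduct, ← Finset.sum_add_distrib]
  exact HasDerivAt.fun_sum fun i _ ↦ (hasDerivAt_pi.1 hf i).mul (hasDerivAt_pi.1 hg i)

theorem dotProduct_deriv_eq_zero_of_dotProduct_self_eq_one {n : ℝ → ι → ℝ} {n' : ι → ℝ} {t : ℝ}
    (hunit : ∀ s, n s ⬝ᵥ n s = 1) (hn : HasDerivAt n n' t) : n t ⬝ᵥ n' = 0 := by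
  have hconst : HasDerivAt (fun s ↦ n s ⬝ᵥ n s) 0 t := by
    simpa only [hunit] using hasDerivAt_const t (1 : ℝ)
  have hsymm : n' ⬝ᵥ n t + n t ⬝ᵥ n' = 0 := (hasDerivAt_dotProduct hn hn).unique hconst
  rw [dotProduct_comm n'] at hsymm
  linarith

end UnitVector

theorem cross_cross_eq_neg_of_dotProduct_eq_zero {R : Type*} [CommRing R] {n w : Fin 3 → R}
    (hn : n ⬝ᵥ n = 1) (hw : n ⬝ᵥ w = 0) : n ⨯₃ (n ⨯₃ w) = -w := by
  rw [cross_cross_eq_smul_sub_smul', hn, hw, zero_smul, one_smul, zero_sub]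

/-- The coefficient `A` of the triple product in the Bortz equation. At multiples of
`2π`, where a denominator vanishes, its value is an artefact of `x / 0 = 0`. -/
noncomputable def bortzCoeff (x : ℝ) : ℝ :=
  (1 / x ^ 2) * (1 - x * Real.sin x / (2 * (1 - Real.cos x)))

theorem bortzCoeff_neg (x : ℝ) : bortzCoeff (-x) = bortzCoeff x := by
  simp only [bortzCoeff, neg_sq, Real.sin_neg, Real.cos_neg, neg_mul_neg]

theorem bortzCoeff_abs (x : ℝ) : bortzCoeff |x| = bortzCoeff x := by
  rcases abs_choice x with h | h <;> simp only [h, bortzCoeff_neg]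

theorem sq_mul_bortzCoeff {x : ℝ} (hx : x ≠ 0) :
    x ^ 2 * bortzCoeff x = 1 - x * Real.sin x / (2 * (1 - Real.cos x)) := by
  rw [bortzCoeff, ← mul_assoc, mul_one_div_cancel (pow_ne_zero 2 hx), one_mul]

/-- The right-hand side of the Bortz equation for rotation vector `σ` and angular velocity `ω`.
The Euclidean norm is written out because `Fin 3 → ℝ` carries the sup norm. -/
noncomputable def bortzRate (σ ω : Fin 3 → ℝ) : Fin 3 → ℝ :=
  ω + (1 / 2 : ℝ) • (σ ⨯₃ ω) + bortzCoeff √(∑ i, σ i ^ 2) • (σ ⨯₃ (σ ⨯₃ ω))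

/-- The body-frame angular velocity of a rotation by the constant angle `α` about a moving unit
axis that is at `n` and has velocity `n'`. -/
noncomputable def constAngleAngularVelocity (α : ℝ) (n n' : Fin 3 → ℝ) : Fin 3 → ℝ :=
  Real.sin α • n' - (1 - Real.cos α) • (n ⨯₃ n')

section ConstAngle

variable {α : ℝ} {n n' : Fin 3 → ℝ}

theorem dotProduct_constAngleAngularVelocity (hperp : n ⬝ᵥ n' = 0) :
    n ⬝ᵥ constAngleAngularVelocity α n n' = 0 := by
  simp only [constAngleAngularVelocity, dotProduct_sub, dotProduct_smul, hperp, dot_self_cross,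
    smul_zero, sub_zero]

theorem cross_constAngleAngularVelocity (hunit : n ⬝ᵥ n = 1) (hperp : n ⬝ᵥ n' = 0) :
    n ⨯₃ constAngleAngularVelocity α n n' =
      Real.sin α • (n ⨯₃ n') + (1 - Real.cos α) • n' := by
  rw [constAngleAngularVelocity, map_sub, map_smul, map_smul,
    cross_cross_eq_neg_of_dotProduct_eq_zero hunit hperp, smul_neg, sub_neg_eq_add]

theorem bortzRate_smul_of_dotProduct_eq_zero {ω : Fin 3 → ℝ} (hunit : n ⬝ᵥ n = 1)
    (hω : n ⬝ᵥ ω = 0) :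
    bortzRate (α • n) ω = (1 - α ^ 2 * bortzCoeff α) • ω + (α / 2) • (n ⨯₃ ω) := by
  simp only [bortzRate, sqrt_sum_sq_smul_of_dotProduct_self_eq_one hunit, bortzCoeff_abs, map_smul,
    LinearMap.smul_apply, cross_cross_eq_neg_of_dotProduct_eq_zero hunit hω]
  module

theorem bortzRate_constAngleAngularVelocity (hcos : Real.cos α ≠ 1) (hunit : n ⬝ᵥ n = 1)
    (hperp : n ⬝ᵥ n' = 0) :
    bortzRate (α • n) (constAngleAngularVelocity α n n') = α • n' := by
  have hα : α ≠ 0 := fun h ↦ hcos (by rw [h, Real.cos_zero])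
  have hden : 1 - Real.cos α ≠ 0 := sub_ne_zero.2 hcos.symm
  have hsin : Real.sin α ^ 2 = (1 - Real.cos α) * (1 + Real.cos α) := by
    rw [Real.sin_sq]; ring
  rw [bortzRate_smul_of_dotProduct_eq_zero hunit (dotProduct_constAngleAngularVelocity hperp),
    sq_mul_bortzCoeff hα, sub_sub_cancel, cross_constAngleAngularVelocity hunit hperp,
    constAngleAngularVelocity]
  match_scalars
  · field_simp
    linear_combination hsin
  · field_simp
    ring

end ConstAngle

theorem hasDerivAt_smul_bortzRate {α t : ℝ} {n : ℝ → Fin 3 → ℝ} {n' : Fin 3 → ℝ}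
    (hcos : Real.cos α ≠ 1) (hunit : ∀ s, n s ⬝ᵥ n s = 1) (hn : HasDerivAt n n' t) :
    HasDerivAt (fun s ↦ α • n s)
      (bortzRate (α • n t) (constAngleAngularVelocity α (n t) n')) t := by
  rw [bortzRate_constAngleAngularVelocity hcos (hunit t)
    (dotProduct_deriv_eq_zero_of_dotProduct_self_eq_one hunit hn)]
  exact hn.const_smul α

/-- The axis of the classical coning motion: the unit vector rotating in the plane of the last two
coordinates with angular frequency `Ω`. -/
noncomputable def coningAxis (Ω t : ℝ) : Fin 3 → ℝ :=
  ![0, Real.cos (Ω * t), Real.sin (Ω * t)]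

theorem coningAxis_dotProduct_self (Ω t : ℝ) : coningAxis Ω t ⬝ᵥ coningAxis Ω t = 1 := by
  simp [coningAxis, ← sq]

theorem hasDerivAt_coningAxis (Ω t : ℝ) :
    HasDerivAt (coningAxis Ω) (Ω • ![0, -Real.sin (Ω * t), Real.cos (Ω * t)]) t := by
  have hphase : HasDerivAt (fun s ↦ Ω * s) Ω t := hasDerivAt_const_mul Ω
  refine hasDerivAt_pi.2 fun i ↦ ?_
  fin_cases i
  · simpa [coningAxis] using hasDerivAt_const t (0 : ℝ)
  · simpa [coningAxis, mul_comm] using hphase.cos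
  · simpa [coningAxis, mul_comm] using hphase.sin

theorem constAngleAngularVelocity_coningAxis (α Ω t : ℝ) :
    constAngleAngularVelocity α (coningAxis Ω t)
        (Ω • ![0, -Real.sin (Ω * t), Real.cos (Ω * t)]) =
      Ω • ![-2 * Real.sin (α / 2) ^ 2, -(Real.sin α * Real.sin (Ω * t)),
        Real.sin α * Real.cos (Ω * t)] := by
  have hhalf : -2 * Real.sin (α / 2) ^ 2 = -(1 - Real.cos α) := by
    rw [Real.sin_sq_eq_half_sub, mul_div_cancel₀ α two_ne_zero]
    ring
  have hcross : coningAxis Ω t ⨯₃ ![0, -Real.sin (Ω * t), Real.cos (Ω * t)] = ![1, 0, 0] := by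
    simp [coningAxis, cross_apply, ← sq]
  rw [constAngleAngularVelocity, map_smul, hcross, hhalf]
  ext i
  fin_cases i <;> simp <;> ring

/-- The classical coning motion rotation vector `σ(t) = α(0, cos(Ωt), sin(Ωt))`
has constant Euclidean magnitude `|α|` and satisfies the Bortz rotation vector
rate equation `σ̇ = ω + ½ σ × ω + A(α) σ × (σ × ω)` with
`A(α) = (1/α²)(1 − α sin α / (2(1 − cos α)))`, where
`ω(t) = Ω(−2sin²(α/2), −sin α sin(Ωt), sin α cos(Ωt))`. -/
theorem coning_motion_bortz_kinematics
    (α Ω : ℝ) (hα : α ≠ 0) (hcα : Real.cos α ≠ 1)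
    (σ ω : ℝ → Fin 3 → ℝ)
    (hσ : ∀ t : ℝ, σ t = α • ![0, Real.cos (Ω * t), Real.sin (Ω * t)])
    (hω : ∀ t : ℝ, ω t =
      Ω • ![-2 * Real.sin (α / 2) ^ 2, -(Real.sin α * Real.sin (Ω * t)),
        Real.sin α * Real.cos (Ω * t)]) :
    Differentiable ℝ σ ∧
    (∀ t : ℝ, Real.sqrt (∑ i, (σ t i) ^ 2) = |α|) ∧
    ∀ t : ℝ, deriv σ t =
      ω t + (1 / 2 : ℝ) • crossProduct (σ t) (ω t)
          + ((1 / α ^ 2) * (1 - α * Real.sin α / (2 * (1 - Real.cos α)))) •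
              crossProduct (σ t) (crossProduct (σ t) (ω t)) := by
  have hnorm (t : ℝ) : √(∑ i, σ t i ^ 2) = |α| := by
    rw [hσ]
    exact sqrt_sum_sq_smul_of_dotProduct_self_eq_one (coningAxis_dotProduct_self Ω t) α
  have hbortz (t : ℝ) : HasDerivAt σ (bortzRate (σ t) (ω t)) t := by
    have hσ_axis : σ = fun s ↦ α • coningAxis Ω s := funext hσ
    rw [hω, ← constAngleAngularVelocity_coningAxis, hσ_axis]
    exact hasDerivAt_smul_bortzRate hcα (coningAxis_dotProduct_self Ω) (hasDerivAt_coningAxis Ω t)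
  refine ⟨fun t ↦ (hbortz t).differentiableAt, hnorm, fun t ↦ ?_⟩
  rw [(hbortz t).deriv, bortzRate, hnorm, bortzCoeff_abs, bortzCoeff]
end

section
/- Let ω : ℝ → ℝ³ be continuous and g : ℝ → ℝ³ be differentiable with ġ(t) = ω(t) + ½ g(t) × ω(t) + ¼ ⟨g(t), ω(t)⟩ g(t) for all t. Define the quaternion-valued function q(t) whose real part is 2/√(4 + |g(t)|²) and whose vector part is g(t)/√(4 + |g(t)|²). Then q(t) has unit norm for every t, q is differentiable, and q̇(t) = ½ q(t) ∘ ω(t) for all t, where ω(t) is regarded as a pure quaternion. -/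
open Matrix

/-!
Put `p = 2 + g`, so that `q = p / |p|`. Since `g ∘ ω = -⟨g, ω⟩ + g × ω`, the rate equation for `g`
reads `ṗ = ½ p ∘ ω + ¼ ⟨g, ω⟩ p`. As `ω` is pure, `p ∘ ω` is orthogonal to `p`, so the second term
only changes the length of `p`; normalizing removes it and leaves `q̇ = ½ q ∘ ω`.
-/

open scoped Quaternion RealInnerProductSpace

section Normalization

variable {E : Type*} [NormedAddCommGroup E] [InnerProductSpace ℝ E]
  {p : ℝ → E} {v : E} {c t : ℝ} {s : Set ℝ}

theorem hasDerivWithinAt_norm_of_inner_eq_zero (hp : HasDerivWithinAt p (v + c • p t) s t)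
    (hv : ⟪p t, v⟫ = 0) (hpt : p t ≠ 0) :
    HasDerivWithinAt (fun τ ↦ ‖p τ‖) (c * ‖p t‖) s t := by
  have hnorm : ‖p t‖ ≠ 0 := norm_ne_zero_iff.2 hpt
  have hsqrt := hp.norm_sq.sqrt (pow_ne_zero 2 hnorm)
  simp only [Real.sqrt_sq (norm_nonneg _)] at hsqrt
  refine hsqrt.congr_deriv ?_
  rw [inner_add_right, hv, real_inner_smul_right, real_inner_self_eq_norm_sq]
  field_simp
  ring

theorem hasDerivWithinAt_normalize_of_inner_eq_zero (hp : HasDerivWithinAt p (v + c • p t) s t)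
    (hv : ⟪p t, v⟫ = 0) (hpt : p t ≠ 0) :
    HasDerivWithinAt (fun τ ↦ ‖p τ‖⁻¹ • p τ) (‖p t‖⁻¹ • v) s t := by
  have hnorm : ‖p t‖ ≠ 0 := norm_ne_zero_iff.2 hpt
  have hinv := (hasDerivWithinAt_norm_of_inner_eq_zero hp hv hpt).fun_inv hnorm
  refine (hinv.fun_smul hp).congr_deriv ?_
  match_scalars <;> field_simp
  ring

end Normalization

theorem quaternion_inner_self_mul (a b : ℍ[ℝ]) : ⟪a, a * b⟫ = ‖a‖ ^ 2 * b.re := by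
  have re_mul_comm (x y : ℍ[ℝ]) : (x * y).re = (y * x).re := by
    simp only [Quaternion.re_mul]
    ring
  calc ⟪a, a * b⟫ = (a * (star b * star a)).re := by rw [Quaternion.inner_def, star_mul]
    _ = (star b * (star a * a)).re := by rw [re_mul_comm, mul_assoc]
    _ = ‖a‖ ^ 2 * b.re := by
      rw [Quaternion.star_mul_self, Quaternion.mul_coe_eq_smul, Quaternion.re_smul,
        Quaternion.re_star, Quaternion.normSq_eq_norm_mul_self, sq, smul_eq_mul]

section PureQuaternion

variable {R : Type*} [CommRing R]

/-- The inclusion of three-dimensional vectors into the quaternions as the pure (imaginary)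
quaternions. -/
def pureQuaternion : (Fin 3 → R) →ₗ[R] ℍ[R] where
  toFun v := ⟨0, v 0, v 1, v 2⟩
  map_add' _ _ := QuaternionAlgebra.ext (add_zero 0).symm rfl rfl rfl
  map_smul' a _ := QuaternionAlgebra.ext (mul_zero a).symm rfl rfl rfl

@[simp]
theorem re_pureQuaternion (v : Fin 3 → R) : (pureQuaternion v).re = 0 := rfl

@[simp]
theorem imI_pureQuaternion (v : Fin 3 → R) : (pureQuaternion v).imI = v 0 := rfl

@[simp]
theorem imJ_pureQuaternion (v : Fin 3 → R) : (pureQuaternion v).imJ = v 1 := rfl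

@[simp]
theorem imK_pureQuaternion (v : Fin 3 → R) : (pureQuaternion v).imK = v 2 := rfl

theorem pureQuaternion_mul (v w : Fin 3 → R) :
    pureQuaternion v * pureQuaternion w = pureQuaternion (v ⨯₃ w) - ((v ⬝ᵥ w : R) : ℍ[R]) := by
  ext <;> simp [-Quaternion.coe_add, -Quaternion.coe_mul, cross_apply, vec3_dotProduct] <;> ring

end PureQuaternion

/-- The unnormalized attitude quaternion `2 + g` of the Rodrigues vector `g`. -/
noncomputable def rodriguesNumerator (g : Fin 3 → ℝ) : ℍ[ℝ] := (2 : ℝ) + pureQuaternion g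

/-- The attitude quaternion `(2 + g) / |2 + g|` of the Rodrigues vector `g`. -/
noncomputable def rodriguesQuaternion (g : Fin 3 → ℝ) : ℍ[ℝ] :=
  ‖rodriguesNumerator g‖⁻¹ • rodriguesNumerator g

theorem rodriguesNumerator_ne_zero (g : Fin 3 → ℝ) : rodriguesNumerator g ≠ 0 := fun h ↦ by
  simpa [rodriguesNumerator] using congrArg QuaternionAlgebra.re h

theorem norm_rodriguesNumerator (g : Fin 3 → ℝ) :
    ‖rodriguesNumerator g‖ = √(4 + ∑ i, g i ^ 2) := by
  have hsq : ‖rodriguesNumerator g‖ ^ 2 = 4 + ∑ i, g i ^ 2 := by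
    rw [sq, ← Quaternion.normSq_eq_norm_mul_self, Quaternion.normSq_def']
    norm_num [rodriguesNumerator, Fin.sum_univ_three, add_assoc]
  rw [← hsq, Real.sqrt_sq (norm_nonneg _)]

theorem rodriguesQuaternion_eq_mk (g : Fin 3 → ℝ) :
    rodriguesQuaternion g =
      ⟨2 / √(4 + ∑ i, g i ^ 2), g 0 / √(4 + ∑ i, g i ^ 2),
        g 1 / √(4 + ∑ i, g i ^ 2), g 2 / √(4 + ∑ i, g i ^ 2)⟩ := by
  rw [rodriguesQuaternion, norm_rodriguesNumerator]
  ext <;> simp [rodriguesNumerator, div_eq_inv_mul]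

theorem norm_rodriguesQuaternion (g : Fin 3 → ℝ) : ‖rodriguesQuaternion g‖ = 1 :=
  norm_smul_inv_norm (𝕜 := ℝ) (rodriguesNumerator_ne_zero g)

theorem pureQuaternion_rodrigues_rate (g ω : Fin 3 → ℝ) :
    pureQuaternion (ω + (1 / 2 : ℝ) • g ⨯₃ ω + (1 / 4 : ℝ) • (g ⬝ᵥ ω) • g) =
      (1 / 2 : ℝ) • (rodriguesNumerator g * pureQuaternion ω)
        + ((g ⬝ᵥ ω) / 4) • rodriguesNumerator g := by
  have coe_eq_smul_one (r : ℝ) : (r : ℍ[ℝ]) = r • 1 := Algebra.algebraMap_eq_smul_one r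
  simp only [rodriguesNumerator, coe_eq_smul_one, add_mul, smul_one_mul, pureQuaternion_mul,
    map_add, map_smul]
  module

theorem hasDerivWithinAt_rodriguesNumerator {g : ℝ → Fin 3 → ℝ} {g' : Fin 3 → ℝ} {s : Set ℝ}
    {t : ℝ} (hg : HasDerivWithinAt g g' s t) :
    HasDerivWithinAt (fun τ ↦ rodriguesNumerator (g τ)) (pureQuaternion g') s t :=
  (pureQuaternion.toContinuousLinearMap.hasFDerivAt.comp_hasDerivWithinAt t hg).const_add _

theorem rodrigues_to_quaternion_kinematics_general {g : ℝ → Fin 3 → ℝ} {ω : Fin 3 → ℝ}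
    {s : Set ℝ} {t : ℝ}
    (hg : HasDerivWithinAt g
      (ω + (1 / 2 : ℝ) • g t ⨯₃ ω + (1 / 4 : ℝ) • (g t ⬝ᵥ ω) • g t) s t) :
    ‖rodriguesQuaternion (g t)‖ = 1 ∧
      HasDerivWithinAt (fun τ ↦ rodriguesQuaternion (g τ))
        ((1 / 2 : ℝ) • (rodriguesQuaternion (g t) * pureQuaternion ω)) s t := by
  have hp := hasDerivWithinAt_rodriguesNumerator hg
  rw [pureQuaternion_rodrigues_rate] at hp
  have horth : ⟪rodriguesNumerator (g t),
      (1 / 2 : ℝ) • (rodriguesNumerator (g t) * pureQuaternion ω)⟫ = 0 := by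
    simp [real_inner_smul_right, quaternion_inner_self_mul]
  refine ⟨norm_rodriguesQuaternion (g t), (hasDerivWithinAt_normalize_of_inner_eq_zero hp horth
    (rodriguesNumerator_ne_zero (g t))).congr_deriv ?_⟩
  rw [rodriguesQuaternion, smul_mul_assoc, smul_comm]

/-- If the Rodrigues vector `g` satisfies `ġ = ω + ½ g × ω + ¼ ⟨g, ω⟩ g`, then the
associated quaternion `q = (2 + g)/√(4 + |g|²)` has unit norm, is differentiable,
and satisfies the quaternion kinematic equation `q̇ = ½ q ∘ ω`. -/
theorem rodrigues_to_quaternion_kinematics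
    (ω : ℝ → Fin 3 → ℝ) (hωc : Continuous ω)
    (g : ℝ → Fin 3 → ℝ) (hg : Differentiable ℝ g)
    (heq : ∀ t : ℝ, deriv g t =
      ω t + (1 / 2 : ℝ) • crossProduct (g t) (ω t)
          + (1 / 4 : ℝ) • ((∑ i, g t i * ω t i) • g t))
    (q : ℝ → Quaternion ℝ)
    (hq : ∀ t : ℝ, q t =
      ⟨2 / Real.sqrt (4 + ∑ i, (g t i) ^ 2),
        g t 0 / Real.sqrt (4 + ∑ i, (g t i) ^ 2),
        g t 1 / Real.sqrt (4 + ∑ i, (g t i) ^ 2),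
        g t 2 / Real.sqrt (4 + ∑ i, (g t i) ^ 2)⟩) :
    (∀ t : ℝ, ‖q t‖ = 1) ∧ Differentiable ℝ q ∧
      ∀ t : ℝ, deriv q t =
        (1 / 2 : ℝ) • (q t * ⟨0, ω t 0, ω t 1, ω t 2⟩) := by
  obtain rfl : q = fun t ↦ rodriguesQuaternion (g t) :=
    funext fun t ↦ (hq t).trans (rodriguesQuaternion_eq_mk (g t)).symm
  have hkin (t : ℝ) := rodrigues_to_quaternion_kinematics_general (s := Set.univ)
    ((hg t).hasDerivAt.congr_deriv (heq t)).hasDerivWithinAt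
  have hderiv (t : ℝ) := hasDerivWithinAt_univ.1 (hkin t).2
  exact ⟨fun t ↦ (hkin t).1, fun t ↦ (hderiv t).differentiableAt, fun t ↦ (hderiv t).deriv⟩
end

section
/- Let d₀, d₁, d₂ ∈ ℝ³ and define ω(t) = d₀ + t·d₁ + t²·d₂ and θ(t) = ∫₀ᵗ ω(s) ds. If σ : ℝ → ℝ³ is differentiable with σ(0) = 0 and σ̇(t) = ω(t) + ½ θ(t) × ω(t) for all t, then σ(t) = t·d₀ + (t²/2)·d₁ + (t³/12)·(4·d₂ + d₀ × d₁) + (t⁴/12)·(d₀ × d₂) + (t⁵/60)·(d₁ × d₂) for all t ∈ ℝ. -/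
open Matrix

/-! For polynomial `ω`, the integral `θ` is computed term by term, and bilinearity of the product
turns `½ θ × ω` into the double sum of the terms `tⁱ⁺ʲ⁺¹ / (2(i + 1)) • (dᵢ × dⱼ)`, whose primitive
is again computed term by term; `σ` is determined by its derivative and its initial value. For
quadratic `ω`, antisymmetry kills the diagonal terms and merges the `(i, j)` and `(j, i)` terms. -/

section PowerSums

variable {𝕜 E ι : Type*}

theorem eq_of_hasDerivAt_eq [RCLike 𝕜] [NormedAddCommGroup E] [NormedSpace 𝕜 E] {f g f' : 𝕜 → E}
    (hf : ∀ t, HasDerivAt f (f' t) t) (hg : ∀ t, HasDerivAt g (f' t) t) {a : 𝕜}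
    (ha : f a = g a) : f = g :=
  eq_of_fderiv_eq (fun t => (hf t).differentiableAt) (fun t => (hg t).differentiableAt)
    (fun t => (hf t).hasFDerivAt.fderiv.trans (hg t).hasFDerivAt.fderiv.symm) a ha

theorem hasDerivAt_pow_succ_div_smul [NontriviallyNormedField 𝕜] [CharZero 𝕜]
    [NormedAddCommGroup E] [NormedSpace 𝕜 E] (n : ℕ) (v : E) (t : 𝕜) :
    HasDerivAt (fun x : 𝕜 => (x ^ (n + 1) / (n + 1)) • v) (t ^ n • v) t := by
  have hpow : HasDerivAt (fun x : 𝕜 => x ^ (n + 1) / (n + 1)) (t ^ n) t := by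
    refine ((hasDerivAt_pow (n + 1) t).div_const ((n : 𝕜) + 1)).congr_deriv ?_
    rw [Nat.add_sub_cancel, Nat.cast_add_one, mul_div_cancel_left₀ _ n.cast_add_one_ne_zero]
  exact hpow.smul_const v

theorem hasDerivAt_sum_pow_succ_div_smul [NontriviallyNormedField 𝕜] [CharZero 𝕜]
    [NormedAddCommGroup E] [NormedSpace 𝕜 E] (s : Finset ι) (k : ι → ℕ) (v : ι → E) (t : 𝕜) :
    HasDerivAt (fun x : 𝕜 => ∑ i ∈ s, (x ^ (k i + 1) / (k i + 1)) • v i)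
      (∑ i ∈ s, t ^ k i • v i) t :=
  HasDerivAt.fun_sum fun i _ => hasDerivAt_pow_succ_div_smul (k i) (v i) t

theorem integral_sum_pow_smul [NormedAddCommGroup E] [NormedSpace ℝ E] [CompleteSpace E]
    (s : Finset ι) (k : ι → ℕ) (v : ι → E) (t : ℝ) :
    ∫ x in (0 : ℝ)..t, ∑ i ∈ s, x ^ k i • v i = ∑ i ∈ s, (t ^ (k i + 1) / (k i + 1)) • v i := by
  have hcont : Continuous fun x : ℝ => ∑ i ∈ s, x ^ k i • v i := by fun_prop
  rw [intervalIntegral.integral_eq_sub_of_hasDerivAt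
    (fun x _ => hasDerivAt_sum_pow_succ_div_smul s k v x) (hcont.intervalIntegrable 0 t)]
  simp

theorem bilin_sum_pow_succ_div_smul_sum_pow_smul {F G κ : Type*} [Field 𝕜]
    [AddCommMonoid E] [Module 𝕜 E] [AddCommMonoid F] [Module 𝕜 F] [AddCommMonoid G] [Module 𝕜 G]
    (B : E →ₗ[𝕜] F →ₗ[𝕜] G) (s : Finset ι) (k : ι → ℕ) (v : ι → E)
    (r : Finset κ) (l : κ → ℕ) (w : κ → F) (t : 𝕜) :
    B (∑ i ∈ s, (t ^ (k i + 1) / (k i + 1)) • v i) (∑ j ∈ r, t ^ l j • w j) =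
      ∑ p ∈ s ×ˢ r, t ^ (k p.1 + l p.2 + 1) • (k p.1 + 1 : 𝕜)⁻¹ • B (v p.1) (w p.2) := by
  simp only [map_sum, LinearMap.sum_apply, map_smul, LinearMap.smul_apply,
    Finset.smul_sum, smul_smul, Finset.sum_product_right]
  refine Finset.sum_congr rfl fun j _ => Finset.sum_congr rfl fun i _ => ?_
  congr 1
  ring

end PowerSums

section RotationVector

variable {E : Type*} [NormedAddCommGroup E] [NormedSpace ℝ E] [CompleteSpace E]

theorem simplified_rotation_vector_polynomial_solution {ι : Type*} (B : E →ₗ[ℝ] E →ₗ[ℝ] E)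
    (s : Finset ι) (k : ι → ℕ) (d : ι → E) {ω θ σ : ℝ → E}
    (hω : ∀ t, ω t = ∑ i ∈ s, t ^ k i • d i) (hθ : ∀ t, θ t = ∫ x in (0 : ℝ)..t, ω x)
    (hσ0 : σ 0 = 0) (hσ : ∀ t, HasDerivAt σ (ω t + (1 / 2 : ℝ) • B (θ t) (ω t)) t) (t : ℝ) :
    σ t = ∑ i ∈ s, (t ^ (k i + 1) / (k i + 1)) • d i +
      (1 / 2 : ℝ) • ∑ p ∈ s ×ˢ s,
        (t ^ (k p.1 + k p.2 + 1 + 1) / ((k p.1 + k p.2 + 1 : ℕ) + 1)) •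
          (k p.1 + 1 : ℝ)⁻¹ • B (d p.1) (d p.2) := by
  have hθ_sum (t : ℝ) : θ t = ∑ i ∈ s, (t ^ (k i + 1) / (k i + 1)) • d i := by
    simp only [hθ, hω, integral_sum_pow_smul]
  have hσ_sum (t : ℝ) : HasDerivAt σ (∑ i ∈ s, t ^ k i • d i + (1 / 2 : ℝ) • ∑ p ∈ s ×ˢ s,
      t ^ (k p.1 + k p.2 + 1) • (k p.1 + 1 : ℝ)⁻¹ • B (d p.1) (d p.2)) t := by
    simpa only [hθ_sum, hω, bilin_sum_pow_succ_div_smul_sum_pow_smul] using hσ t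
  have hprimitive (t : ℝ) := (hasDerivAt_sum_pow_succ_div_smul s k d t).add
    ((hasDerivAt_sum_pow_succ_div_smul (s ×ˢ s) (fun p => k p.1 + k p.2 + 1)
      (fun p => (k p.1 + 1 : ℝ)⁻¹ • B (d p.1) (d p.2)) t).const_smul (1 / 2 : ℝ))
  exact congrFun (eq_of_hasDerivAt_eq hσ_sum hprimitive (a := 0) (by simp [hσ0])) t

theorem simplified_rotation_vector_quadratic_solution_general
    {B : E →ₗ[ℝ] E →ₗ[ℝ] E} (hB : B.IsAlt) (d0 d1 d2 : E) {ω θ σ : ℝ → E}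
    (hω : ∀ t, ω t = d0 + t • d1 + t ^ 2 • d2) (hθ : ∀ t, θ t = ∫ s in (0 : ℝ)..t, ω s)
    (hσ0 : σ 0 = 0) (hσ : ∀ t, HasDerivAt σ (ω t + (1 / 2 : ℝ) • B (θ t) (ω t)) t) (t : ℝ) :
    σ t = t • d0 + (t ^ 2 / 2) • d1 + (t ^ 3 / 12) • ((4 : ℝ) • d2 + B d0 d1) +
      (t ^ 4 / 12) • B d0 d2 + (t ^ 5 / 60) • B d1 d2 := by
  have hω_sum (t : ℝ) : ω t = ∑ i : Fin 3, t ^ i.val • ![d0, d1, d2] i := by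
    simp [hω, Fin.sum_univ_three]
  have h10 : B d1 d0 = -B d0 d1 := (hB.neg d0 d1).symm
  have h20 : B d2 d0 = -B d0 d2 := (hB.neg d0 d2).symm
  have h21 : B d2 d1 = -B d1 d2 := (hB.neg d1 d2).symm
  rw [simplified_rotation_vector_polynomial_solution B _ _ _ hω_sum hθ hσ0 hσ t]
  simp only [Finset.sum_product, Fin.sum_univ_three, Fin.val_zero, Fin.val_one, Fin.val_two,
    Nat.cast_zero, Nat.cast_one, Nat.cast_ofNat, cons_val, hB.self_eq_zero, h10, h20, h21]
  module

end RotationVector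

/-- Solution of the simplified rotation vector rate equation
`σ̇ = ω + ½ (∫₀ᵗ ω) × ω`, `σ(0) = 0`, for quadratic angular velocity
`ω(t) = d₀ + t d₁ + t² d₂`:
`σ(t) = t d₀ + (t²/2) d₁ + (t³/12)(4 d₂ + d₀ × d₁) + (t⁴/12) d₀ × d₂ + (t⁵/60) d₁ × d₂`. -/
theorem simplified_rotation_vector_quadratic_solution
    (d0 d1 d2 : Fin 3 → ℝ)
    (ω : ℝ → Fin 3 → ℝ) (hω : ∀ t : ℝ, ω t = d0 + t • d1 + t ^ 2 • d2)
    (θ : ℝ → Fin 3 → ℝ) (hθ : ∀ t : ℝ, θ t = ∫ s in (0 : ℝ)..t, ω s)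
    (σ : ℝ → Fin 3 → ℝ) (hσd : Differentiable ℝ σ) (hσ0 : σ 0 = 0)
    (heq : ∀ t : ℝ, deriv σ t = ω t + (1 / 2 : ℝ) • crossProduct (θ t) (ω t)) :
    ∀ t : ℝ, σ t =
      t • d0 + (t ^ 2 / 2) • d1
      + (t ^ 3 / 12) • ((4 : ℝ) • d2 + crossProduct d0 d1)
      + (t ^ 4 / 12) • crossProduct d0 d2
      + (t ^ 5 / 60) • crossProduct d1 d2 := by
  exact simplified_rotation_vector_quadratic_solution_general cross_self d0 d1 d2 hω hθ hσ0
    fun t => heq t ▸ (hσd t).hasDerivAt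
end

section
/- Let T > 0 and d₀, d₁ ∈ ℝ³, define ω(t) = d₀ + t·d₁, θ(t) = ∫₀ᵗ ω(s) ds, Δθ₁ = ∫₀ᵀ ω(s) ds and Δθ₂ = ∫_T^{2T} ω(s) ds. If σ : ℝ → ℝ³ is differentiable with σ(0) = 0 and σ̇(t) = ω(t) + ½ θ(t) × ω(t) for all t, then σ(2T) = Δθ₁ + Δθ₂ + (2/3)·(Δθ₁ × Δθ₂) (the mainstream 2-sample attitude algorithm is exact for linear angular velocity). -/
open Matrix

/-!
For an alternating product, `(a • x + b • y) × (c • x + d • y) = (a * d - b * c) • (x × y)`. With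
`ω t = d₀ + t • d₁` this gives `θ t × ω t = (t ^ 2 / 2) • (d₀ × d₁)`, so that
`σ t = θ t + (t ^ 3 / 12) • (d₀ × d₁)`, and also `Δθ₁ × Δθ₂ = T ^ 3 • (d₀ × d₁)`. The coefficient
`2 / 3` is `2 ^ 3 / 12`.
-/

theorem isAlt_crossProduct {R : Type*} [CommRing R] :
    (crossProduct : (Fin 3 → R) →ₗ[R] (Fin 3 → R) →ₗ[R] Fin 3 → R).IsAlt :=
  cross_self

theorem isAlt_apply_smul_add_smul {R M N : Type*} [CommRing R] [AddCommGroup M] [Module R M]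
    [AddCommGroup N] [Module R N] {B : M →ₗ[R] M →ₗ[R] N} (hB : B.IsAlt)
    (a b c d : R) (x y : M) :
    B (a • x + b • y) (c • x + d • y) = (a * d - b * c) • B x y := by
  simp only [map_add, map_smul, LinearMap.add_apply, LinearMap.smul_apply, hB.self_eq_zero,
    ← hB.neg x y]
  module

section

variable {E : Type*} [NormedAddCommGroup E] [NormedSpace ℝ E] [CompleteSpace E]

theorem integral_add_smul_const (a b : ℝ) (x y : E) :
    ∫ s in a..b, (x + s • y) = (b - a) • x + ((b ^ 2 - a ^ 2) / 2) • y := by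
  rw [intervalIntegral.integral_add intervalIntegrable_const
      (Continuous.intervalIntegrable (by fun_prop) a b),
    intervalIntegral.integral_const, intervalIntegral.integral_smul_const, integral_id]

theorem isAlt_apply_integral_add_smul_const {F : Type*} [AddCommGroup F] [Module ℝ F]
    {B : E →ₗ[ℝ] E →ₗ[ℝ] F} (hB : B.IsAlt) (x y : E) (t : ℝ) :
    B (∫ s in (0 : ℝ)..t, (x + s • y)) (x + t • y) = (t ^ 2 / 2) • B x y := by
  have hdet := isAlt_apply_smul_add_smul hB (t - 0) ((t ^ 2 - 0 ^ 2) / 2) 1 t x y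
  rw [one_smul] at hdet
  rw [integral_add_smul_const, hdet]
  module

theorem isAlt_apply_integral_integral_two_mul {F : Type*} [AddCommGroup F] [Module ℝ F]
    {B : E →ₗ[ℝ] E →ₗ[ℝ] F} (hB : B.IsAlt) (x y : E) (T : ℝ) :
    B (∫ s in (0 : ℝ)..T, (x + s • y)) (∫ s in T..(2 * T), (x + s • y)) = T ^ 3 • B x y := by
  rw [integral_add_smul_const, integral_add_smul_const, isAlt_apply_smul_add_smul hB]
  module

variable {B : E →ₗ[ℝ] E →ₗ[ℝ] E}

theorem rotation_vector_eq_of_linear_angular_velocity (hB : B.IsAlt) {d0 d1 : E} {σ : ℝ → E}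
    {t : ℝ} (hσ0 : σ 0 = 0)
    (hσ : ∀ u ∈ Set.uIcc 0 t, HasDerivAt σ
      (d0 + u • d1 + (1 / 2 : ℝ) • B (∫ s in (0 : ℝ)..u, (d0 + s • d1)) (d0 + u • d1)) u) :
    σ t = (∫ s in (0 : ℝ)..t, (d0 + s • d1)) + (t ^ 3 / 12) • B d0 d1 := by
  have hderiv : ∀ u ∈ Set.uIcc 0 t, HasDerivAt σ (d0 + u • d1 + (u ^ 2 / 4) • B d0 d1) u := by
    intro u hu
    convert hσ u hu using 2
    rw [isAlt_apply_integral_add_smul_const hB]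
    module
  calc
    σ t = ∫ u in (0 : ℝ)..t, (d0 + u • d1 + (u ^ 2 / 4) • B d0 d1) := by
      rw [intervalIntegral.integral_eq_sub_of_hasDerivAt hderiv
        (Continuous.intervalIntegrable (by fun_prop) 0 t), hσ0, sub_zero]
    _ = (∫ u in (0 : ℝ)..t, (d0 + u • d1)) + (∫ u in (0 : ℝ)..t, u ^ 2 / 4) • B d0 d1 := by
      rw [intervalIntegral.integral_add (Continuous.intervalIntegrable (by fun_prop) 0 t)
        (Continuous.intervalIntegrable (by fun_prop) 0 t), intervalIntegral.integral_smul_const]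
    _ = (∫ u in (0 : ℝ)..t, (d0 + u • d1)) + (t ^ 3 / 12) • B d0 d1 := by
      rw [intervalIntegral.integral_div, integral_pow]
      module

theorem mainstream_two_sample_algorithm_exact_general (hB : B.IsAlt) {T : ℝ} {d0 d1 : E}
    {σ : ℝ → E} (hσ0 : σ 0 = 0)
    (hσ : ∀ t ∈ Set.uIcc 0 (2 * T), HasDerivAt σ
      (d0 + t • d1 + (1 / 2 : ℝ) • B (∫ s in (0 : ℝ)..t, (d0 + s • d1)) (d0 + t • d1)) t) :
    σ (2 * T) = (∫ s in (0 : ℝ)..T, (d0 + s • d1)) + (∫ s in T..(2 * T), (d0 + s • d1)) +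
      (2 / 3 : ℝ) • B (∫ s in (0 : ℝ)..T, (d0 + s • d1)) (∫ s in T..(2 * T), (d0 + s • d1)) := by
  have hint (a b : ℝ) : IntervalIntegrable (fun s : ℝ ↦ d0 + s • d1) MeasureTheory.volume a b :=
    Continuous.intervalIntegrable (by fun_prop) a b
  rw [rotation_vector_eq_of_linear_angular_velocity hB hσ0 hσ,
    isAlt_apply_integral_integral_two_mul hB,
    intervalIntegral.integral_add_adjacent_intervals (hint 0 T) (hint T (2 * T))]
  module

end

/-- The mainstream 2-sample attitude algorithm is exact for linear angular
velocity: if `ω(t) = d₀ + t d₁`, `σ̇ = ω + ½ (∫₀ᵗ ω) × ω`, `σ(0) = 0`, and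
`Δθ₁ = ∫₀ᵀ ω`, `Δθ₂ = ∫_T^{2T} ω`, then
`σ(2T) = Δθ₁ + Δθ₂ + (2/3) Δθ₁ × Δθ₂`. -/
theorem mainstream_two_sample_algorithm_exact
    (T : ℝ) (hT : 0 < T) (d0 d1 : Fin 3 → ℝ)
    (ω : ℝ → Fin 3 → ℝ) (hω : ∀ t : ℝ, ω t = d0 + t • d1)
    (θ : ℝ → Fin 3 → ℝ) (hθ : ∀ t : ℝ, θ t = ∫ s in (0 : ℝ)..t, ω s)
    (Δθ1 Δθ2 : Fin 3 → ℝ)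
    (h1 : Δθ1 = ∫ s in (0 : ℝ)..T, ω s)
    (h2 : Δθ2 = ∫ s in T..(2 * T), ω s)
    (σ : ℝ → Fin 3 → ℝ) (hσd : Differentiable ℝ σ) (hσ0 : σ 0 = 0)
    (heq : ∀ t : ℝ, deriv σ t = ω t + (1 / 2 : ℝ) • crossProduct (θ t) (ω t)) :
    σ (2 * T) = Δθ1 + Δθ2 + (2 / 3 : ℝ) • crossProduct Δθ1 Δθ2 := by
  obtain rfl : ω = fun t ↦ d0 + t • d1 := funext hω
  subst h1 h2
  exact mainstream_two_sample_algorithm_exact_general isAlt_crossProduct hσ0 fun t _ ↦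
    (hσd t).hasDerivAt.congr_deriv (by rw [heq, hθ])
end
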